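/- arXiv:2104.11948 — 5 statements merged into one kernel-verified Lean document; each statement's English description precedes it below -/
import Mathlib

section
/- Let n ≥ 1 and let R_n be the quotient of the polynomial ring ℚ[x_0, …, x_{n−1}] by the ideal generated by the elements x_j·x_k − 2^(n−max(j,k))·x_{min(j,k)} for all 0 ≤ j, k ≤ n−1. Then the element y := 1 − (1/2)·x_{n−1} of R_n satisfies y² = y and y·x_j = 0 for every 0 ≤ j ≤ n−1, and y ≠ 0. -/
/-!
Write `t = x_{n-1}`. The relations with one index equal to `n - 1` read `t * x_j = 2 * x_j`, since
`max (n-1) j = n - 1` and `min (n-1) j = j`; hence `y = 1 - t/2` annihilates every `x_j`, in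
particular `t`, and `y ^ 2 = y - (y * t)/2 = y`. All relations have zero constant term, so evaluation
at the origin factors through the quotient; it sends `y` to `1`, so `y ≠ 0`.
-/

open MvPolynomial

/-- The ideal of relations `x_j·x_k = 2^(n - max j k)·x_(min j k)` presenting the rational
Burnside ring of `C_{2^n}`. -/
noncomputable def burnsideIdeal (n : ℕ) : Ideal (MvPolynomial (Fin n) ℚ) :=
  Ideal.span {p | ∃ j k : Fin n,
    p = X j * X k - (2 ^ (n - max j.val k.val) : ℚ) • X (min j k)}

/-- The defining relation whose first index is the largest one, `n - 1`: the coefficient is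
`2 ^ (n - (n - 1)) = 2`. -/
theorem mk_last_mul (n : ℕ) (hn : n - 1 < n) (j : Fin n) :
    Ideal.Quotient.mk (burnsideIdeal n) (X ⟨n - 1, hn⟩) *
        Ideal.Quotient.mk (burnsideIdeal n) (X j) =
      (2 : ℚ) • Ideal.Quotient.mk (burnsideIdeal n) (X j) := by
  have hj : j.val ≤ n - 1 := by omega
  have hmin : min (⟨n - 1, hn⟩ : Fin n) j = j := min_eq_right (Fin.le_def.mpr hj)
  have hexp : n - max (n - 1) j.val = 1 := by omega
  rw [← map_mul, ← Ideal.Quotient.mkₐ_eq_mk ℚ, ← map_smul, Ideal.Quotient.mkₐ_eq_mk,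
    Ideal.Quotient.eq]
  refine Ideal.subset_span ⟨⟨n - 1, hn⟩, j, ?_⟩
  rw [hmin, hexp, pow_one]

/-- Every relation has zero constant term. -/
theorem burnsideIdeal_le_ker (n : ℕ) :
    burnsideIdeal n ≤ RingHom.ker (constantCoeff : MvPolynomial (Fin n) ℚ →+* ℚ) := by
  refine Ideal.span_le.mpr ?_
  rintro p ⟨j, k, rfl⟩
  simp [RingHom.mem_ker, constantCoeff_smul]

/-- In `R_n = ℚ[x_0,…,x_{n-1}] / (x_j x_k - 2^(n - max(j,k)) x_(min(j,k)))` with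
`n ≥ 1`, the element `y = 1 - (1/2)·x_{n-1}` is a nonzero idempotent annihilating every `x_j`. -/
theorem stmt2 (n : ℕ) (hn : 1 ≤ n) :
    letI mk := Ideal.Quotient.mk (burnsideIdeal n)
    letI y : MvPolynomial (Fin n) ℚ ⧸ burnsideIdeal n :=
      1 - (1 / 2 : ℚ) • mk (X ⟨n - 1, by omega⟩)
    y ^ 2 = y ∧ (∀ j : Fin n, y * mk (X j) = 0) ∧ y ≠ 0 := by
  let mk := Ideal.Quotient.mk (burnsideIdeal n)
  let y : MvPolynomial (Fin n) ℚ ⧸ burnsideIdeal n :=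
    1 - (1 / 2 : ℚ) • mk (X ⟨n - 1, by omega⟩)
  change y ^ 2 = y ∧ (∀ j : Fin n, y * mk (X j) = 0) ∧ y ≠ 0
  have hann : ∀ j : Fin n, y * mk (X j) = 0 := by
    intro j
    simp only [y, mk]
    rw [sub_mul, one_mul, smul_mul_assoc, mk_last_mul n _ j, smul_smul]
    norm_num
  refine ⟨?_, hann, ?_⟩
  · calc y ^ 2 = y * (1 - (1 / 2 : ℚ) • mk (X ⟨n - 1, by omega⟩)) := pow_two y
      _ = y := by rw [mul_sub, mul_one, mul_smul_comm, hann, smul_zero, sub_zero]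
  · intro h
    have hy : y = mk (1 - (1 / 2 : ℚ) • X ⟨n - 1, by omega⟩) := rfl
    rw [hy] at h
    have hker := burnsideIdeal_le_ker n (Ideal.Quotient.eq_zero_iff_mem.mp h)
    simp [RingHom.mem_ker, constantCoeff_smul] at hker
end

section
/- Let n ≥ 1 and let R_n be the quotient of the polynomial ring ℚ[x_0, …, x_{n−1}] by the ideal generated by the elements x_j·x_k − 2^(n−max(j,k))·x_{min(j,k)} for all 0 ≤ j, k ≤ n−1. Then R_n is isomorphic as a ℚ-algebra to the product ring ℚ^(n+1) (i.e. to Fin (n+1) → ℚ). (This is the top level of the idempotent splitting A_ℚ = ⊕_{i=0}^n M_i{y_i} of the rational Burnside Green functor of C_{2^n}.) -/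
/-! The isomorphism is the table of marks. The number of fixed points of `C_{2^i}` on the
`C_{2^n}`-set `C_{2^n}/C_{2^j}` is `2^(n-j)` if `i ≤ j` and `0` otherwise, so
`x_j ↦ (i ↦ if i ≤ j then 2^(n-j) else 0)` respects the relations and defines an algebra map
`marksHom n : R_n → ℚ^(n+1)`.

It is surjective: up to scalars, the images of `x_0, …, x_{n-1}, 1` are the indicators of the
nonempty initial segments of `{0, …, n}`, and consecutive differences of these are the standard
basis vectors (`marksHom_surjective`). On the other hand the relations show that
`1, x_0, …, x_{n-1}` span `R_n` (`span_quotGen`), so `dim R_n ≤ n + 1` and the surjection is an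
isomorphism. -/

open MvPolynomial

/-- The marks of `x_j`: the value at `i` is the number of `C_{2^i}`-fixed points of
`C_{2^n}/C_{2^j}`. -/
def mark (n : ℕ) (j : Fin n) : Fin (n + 1) → ℚ :=
  fun i => if i.val ≤ j.val then 2 ^ (n - j.val) else 0

lemma mark_mul (n : ℕ) (j k : Fin n) :
    mark n j * mark n k = (2 ^ (n - max j.val k.val) : ℚ) • mark n (min j k) := by
  wlog h : j ≤ k generalizing j k
  · rw [mul_comm, max_comm, min_comm]
    exact this k j (le_of_not_ge h)
  have h' : j.val ≤ k.val := h
  ext i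
  rw [min_eq_left h, max_eq_right h']
  by_cases hi : i.val ≤ j.val
  · simp [mark, hi, hi.trans h', mul_comm]
  · simp [mark, hi]

/-- The table of marks as an algebra map `R_n → ℚ^(n+1)`. -/
noncomputable def marksHom (n : ℕ) :
    (MvPolynomial (Fin n) ℚ ⧸ burnsideIdeal n) →ₐ[ℚ] (Fin (n + 1) → ℚ) :=
  Ideal.Quotient.liftₐ (burnsideIdeal n) (aeval (mark n)) (by
    suffices h : burnsideIdeal n ≤ RingHom.ker (aeval (R := ℚ) (mark n)) from fun a ha => h ha
    refine Ideal.span_le.2 ?_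
    rintro _ ⟨j, k, rfl⟩
    simp only [SetLike.mem_coe, RingHom.mem_ker, map_sub, map_mul, map_smul, aeval_X]
    rw [mark_mul, sub_self])

lemma marksHom_X (n : ℕ) (j : Fin n) :
    marksHom n (Ideal.Quotient.mk (burnsideIdeal n) (X j)) = mark n j := by
  exact aeval_X (mark n) j

/-- The indicator of the initial segment `{i | i < m}` is a multiple of the image of `x_{m-1}`
for `1 ≤ m ≤ n`; it is the image of `0` for `m = 0` and of `1` for `m = n + 1`. -/
lemma initial_mem_range (n m : ℕ) (hm : m ≤ n + 1) :
    (fun i : Fin (n + 1) => if i.val < m then (1 : ℚ) else 0) ∈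
      LinearMap.range (marksHom n).toLinearMap := by
  rcases m with _ | m
  · convert Submodule.zero_mem _ using 1
    ext i
    simp
  rcases Nat.lt_or_ge m n with h | h
  · convert Submodule.smul_mem _ ((2 ^ (n - m) : ℚ)⁻¹)
      (LinearMap.mem_range_self (marksHom n).toLinearMap
        (Ideal.Quotient.mk (burnsideIdeal n) (X ⟨m, h⟩))) using 1
    ext i
    rw [AlgHom.toLinearMap_apply, marksHom_X]
    simp [mark]
  · refine ⟨1, ?_⟩
    ext i
    have : i.val < m + 1 := by omega
    simp [this]

lemma marksHom_surjective (n : ℕ) : Function.Surjective (marksHom n).toLinearMap := by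
  rw [← LinearMap.range_eq_top, eq_top_iff, ← (Pi.basisFun ℚ (Fin (n + 1))).span_eq,
    Submodule.span_le]
  rintro _ ⟨i, rfl⟩
  -- the `i`-th standard vector is the indicator of `{< i + 1}` minus that of `{< i}`
  have h := Submodule.sub_mem _ (initial_mem_range n (i.val + 1) (by omega))
    (initial_mem_range n i.val (by omega))
  rw [SetLike.mem_coe]
  convert h using 1
  ext l
  simp only [Pi.basisFun_apply, Pi.single_apply, Pi.sub_apply, Fin.ext_iff]
  split_ifs <;> first | omega | norm_num

/-- The family `1, x_0, …, x_{n-1}` in `R_n`, with `none` indexing `1`. -/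
noncomputable def quotGen (n : ℕ) :
    Option (Fin n) → MvPolynomial (Fin n) ℚ ⧸ burnsideIdeal n :=
  fun o => o.elim 1 (fun j => Ideal.Quotient.mk _ (X j))

lemma quotGen_mul (n : ℕ) (j k : Fin n) :
    quotGen n (some j) * quotGen n (some k) =
      (2 ^ (n - max j.val k.val) : ℚ) • quotGen n (some (min j k)) :=
  (Ideal.Quotient.eq (I := burnsideIdeal n)).2 (Ideal.subset_span ⟨j, k, rfl⟩)

/-- The relations rewrite every product of two generators as a multiple of one generator, so the
span of `1, x_0, …, x_{n-1}` is closed under multiplication by each `x_j`. -/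
lemma span_quotGen (n : ℕ) : Submodule.span ℚ (Set.range (quotGen n)) = ⊤ := by
  rw [eq_top_iff]
  rintro a -
  obtain ⟨p, rfl⟩ := Ideal.Quotient.mk_surjective a
  induction p using MvPolynomial.induction_on with
  | C r =>
    have h : Ideal.Quotient.mk (burnsideIdeal n) (C r) = r • quotGen n none := by
      rw [MvPolynomial.C_eq_smul_one]
      rfl
    rw [h]
    exact Submodule.smul_mem _ _ (Submodule.subset_span ⟨_, rfl⟩)
  | add p q hp hq =>
    rw [map_add]
    exact Submodule.add_mem _ hp hq
  | mul_X p j hp =>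
    rw [map_mul]
    change _ * quotGen n (some j) ∈ _
    generalize Ideal.Quotient.mk (burnsideIdeal n) p = a at hp ⊢
    induction hp using Submodule.span_induction with
    | mem x hx =>
      obtain ⟨_ | k, rfl⟩ := hx
      · rw [show quotGen n none = 1 from rfl, one_mul]
        exact Submodule.subset_span ⟨_, rfl⟩
      · rw [quotGen_mul]
        exact Submodule.smul_mem _ _ (Submodule.subset_span ⟨_, rfl⟩)
    | zero => rw [zero_mul]; exact Submodule.zero_mem _
    | add x y _ _ hx hy => rw [add_mul]; exact Submodule.add_mem _ hx hy
    | smul r x _ hx => rw [smul_mul_assoc]; exact Submodule.smul_mem _ _ hx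

/-- For `n ≥ 1`, the rational Burnside ring
`R_n = ℚ[x_0,…,x_{n-1}] / (x_j x_k - 2^(n - max(j,k)) x_(min(j,k)))` is isomorphic as a
`ℚ`-algebra to the product ring `ℚ^(n+1)`. -/
theorem stmt4 (n : ℕ) (hn : 1 ≤ n) :
    Nonempty ((MvPolynomial (Fin n) ℚ ⧸ burnsideIdeal n) ≃ₐ[ℚ] (Fin (n + 1) → ℚ)) := by
  have hfin : Module.Finite ℚ (MvPolynomial (Fin n) ℚ ⧸ burnsideIdeal n) :=
    ⟨⟨(Set.finite_range (quotGen n)).toFinset, by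
      rw [Set.Finite.coe_toFinset, span_quotGen]⟩⟩
  have hle : Module.finrank ℚ (MvPolynomial (Fin n) ℚ ⧸ burnsideIdeal n) ≤ n + 1 := by
    have h := finrank_range_le_card (R := ℚ) (quotGen n)
    rw [Set.finrank, span_quotGen, finrank_top] at h
    simpa using h
  have hsurj := marksHom_surjective n
  have heq : Module.finrank ℚ (MvPolynomial (Fin n) ℚ ⧸ burnsideIdeal n) =
      Module.finrank ℚ (Fin (n + 1) → ℚ) := by
    refine le_antisymm (by simpa using hle) ?_
    exact LinearMap.finrank_le_finrank_of_surjective hsurj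
  have hinj := (LinearMap.injective_iff_surjective_of_finrank_eq_finrank heq).2 hsurj
  exact ⟨AlgEquiv.ofBijective (marksHom n) ⟨hinj, hsurj⟩⟩
end

section
/- Let s ≥ 1 and let S_s be the quotient of the polynomial ring ℚ[e_1, …, e_s] by the ideal generated by the elements e_i·e_j − δ_{ij}·e_i for all 1 ≤ i, j ≤ s (where δ_{ij} is 1 if i = j and 0 otherwise). Then there is an isomorphism of ℚ-algebras ℚ[X]/(X·(X−1)·(X−2)⋯(X−s)) ≅ S_s sending X to the element e := e_1 + 2·e_2 + ⋯ + s·e_s. -/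
/-!
Let `u_i` be the class of `e_{i+1}` for `0 ≤ i < s`. The elements `u_0, …, u_{s-1}` and
`1 - ∑ u_i` sum to `1` and are
eigenvectors for multiplication by `e`, with eigenvalues `1, …, s` and `0`. Hence
`f(e) = f(0) (1 - ∑ u_i) + ∑ f(i+1) u_i` for every `f ∈ ℚ[X]` (`aeval_idemSum`). It follows that
`∏ (X - k)` is killed by evaluation at `e`, and, interpolating, that every `u_i` is a polynomial
in `e`, so that evaluation at `e` is surjective. Conversely, for each `k ≤ s` there is a character
of `S_s` sending `e` to `k`, so `f(e) = 0` forces `f(k) = 0` for all `k ≤ s`, and `∏ (X - k)`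
divides `f`. Thus the kernel of evaluation at `e` is exactly the ideal generated by `∏ (X - k)`.
-/

open MvPolynomial

/-- The ideal of relations `e_i·e_j = δ_{ij}·e_i` presenting the `ℚ`-algebra on `s`
orthogonal idempotents (the variable indexed by `i : Fin s` is `e_{i+1}`). -/
noncomputable def idemIdeal (s : ℕ) : Ideal (MvPolynomial (Fin s) ℚ) :=
  Ideal.span {p | ∃ i j : Fin s, p = X i * X j - if i = j then X i else 0}

/-- An eigenvector of multiplication by `x` with eigenvalue `c` is one of multiplication by `f(x)`,
with eigenvalue `f(c)`. -/
lemma aeval_mul_of_eigen {A : Type*} [CommRing A] [Algebra ℚ A] {x u : A} {c : ℚ}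
    (h : x * u = c • u) (f : Polynomial ℚ) :
    Polynomial.aeval x f * u = f.eval c • u := by
  induction f using Polynomial.induction_on' with
  | add p q hp hq => simp [add_mul, add_smul, hp, hq]
  | monomial n a =>
    have hn : x ^ n * u = c ^ n • u := by
      induction n with
      | zero => simp
      | succ n ih => rw [pow_succ, mul_assoc, h, mul_smul_comm, ih, smul_smul, pow_succ, mul_comm]
    rw [Polynomial.aeval_monomial, Polynomial.eval_monomial, mul_assoc, hn, ← Algebra.smul_def,
      smul_smul]

/-- The class in `S_s` of the variable indexed by `i`, that is, of `e_{i+1}`. -/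
noncomputable def idemGen (s : ℕ) (i : Fin s) : MvPolynomial (Fin s) ℚ ⧸ idemIdeal s :=
  Ideal.Quotient.mk (idemIdeal s) (X i)

/-- The element `e = e_1 + 2 e_2 + ⋯ + s e_s` of `S_s`. -/
noncomputable def idemSum (s : ℕ) : MvPolynomial (Fin s) ℚ ⧸ idemIdeal s :=
  ∑ i : Fin s, ((i : ℕ) + 1 : ℚ) • idemGen s i

lemma idemGen_mul (s : ℕ) (i j : Fin s) :
    idemGen s i * idemGen s j = if i = j then idemGen s i else 0 := by
  have h : X i * X j - (if i = j then X i else 0) ∈ idemIdeal s :=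
    Ideal.subset_span ⟨i, j, rfl⟩
  have h2 := (Ideal.Quotient.eq (I := idemIdeal s)).mpr h
  rw [map_mul] at h2
  unfold idemGen
  rw [h2]
  split_ifs <;> simp

lemma idemSum_mul_idemGen (s : ℕ) (i : Fin s) :
    idemSum s * idemGen s i = ((i : ℕ) + 1 : ℚ) • idemGen s i := by
  simp [idemSum, Finset.sum_mul, idemGen_mul, -Algebra.smul_mul_assoc, smul_mul_assoc]

lemma idemSum_mul_compl (s : ℕ) :
    idemSum s * (1 - ∑ i, idemGen s i) = (0 : ℚ) • (1 - ∑ i, idemGen s i) := by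
  rw [mul_sub, mul_one, Finset.mul_sum]
  simp only [idemSum_mul_idemGen]
  simp [idemSum]

/-- Expansion of `f(e)` in the eigenvectors of multiplication by `e`, which sum to `1`. -/
lemma aeval_idemSum (s : ℕ) (f : Polynomial ℚ) :
    Polynomial.aeval (idemSum s) f =
      f.eval 0 • (1 - ∑ i, idemGen s i) + ∑ i : Fin s, f.eval ((i : ℕ) + 1 : ℚ) • idemGen s i := by
  rw [← aeval_mul_of_eigen (idemSum_mul_compl s) f]
  simp only [← aeval_mul_of_eigen (idemSum_mul_idemGen s _) f]
  rw [← Finset.mul_sum]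
  ring

/-- The character of `S_s` sending `e_k` to `1` and the other generators to `0`; for `k = 0`
or `k > s` it sends all generators to `0`. -/
noncomputable def idemChar (s k : ℕ) : (MvPolynomial (Fin s) ℚ ⧸ idemIdeal s) →ₐ[ℚ] ℚ :=
  Ideal.Quotient.liftₐ (idemIdeal s) (aeval fun i : Fin s => if (i : ℕ) + 1 = k then (1 : ℚ) else 0)
    (by
      intro a ha
      have hle : idemIdeal s ≤ RingHom.ker
          (aeval fun i : Fin s => if (i : ℕ) + 1 = k then (1 : ℚ) else 0 :
            MvPolynomial (Fin s) ℚ →ₐ[ℚ] ℚ) := by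
        refine Ideal.span_le.mpr ?_
        rintro _ ⟨i, j, rfl⟩
        rw [SetLike.mem_coe, RingHom.mem_ker, map_sub, map_mul, aeval_X, aeval_X]
        by_cases hij : i = j
        · subst hij
          split_ifs <;> simp_all
        · have : (i : ℕ) ≠ j := fun h => hij (Fin.ext h)
          simp only [hij, if_false, map_zero, sub_zero]
          split_ifs <;> first | omega | simp
      exact hle ha)

lemma idemChar_idemGen (s k : ℕ) (i : Fin s) :
    idemChar s k (idemGen s i) = if (i : ℕ) + 1 = k then 1 else 0 := by
  have : idemChar s k (idemGen s i) =
    aeval (fun i : Fin s => if (i : ℕ) + 1 = k then (1 : ℚ) else 0) (X i : MvPolynomial _ ℚ) := rfl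
  rw [this, aeval_X]

lemma idemChar_idemSum (s k : ℕ) (hk : k ≤ s) : idemChar s k (idemSum s) = k := by
  simp only [idemSum, map_sum, map_smul, idemChar_idemGen]
  rcases k with _ | k
  · simp
  · rw [Finset.sum_eq_single (⟨k, by omega⟩ : Fin s)]
    · simp
    · intro b _ hb
      have : (b : ℕ) ≠ k := fun h => hb (Fin.ext h)
      simp [this]
    · simp

lemma ker_aeval_idemSum (s : ℕ) :
    Ideal.span {∏ k ∈ Finset.range (s + 1), (Polynomial.X - Polynomial.C (k : ℚ))} =
      RingHom.ker (Polynomial.aeval (R := ℚ) (idemSum s)) := by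
  apply le_antisymm
  · rw [Ideal.span_singleton_le_iff_mem, RingHom.mem_ker, aeval_idemSum]
    have h : ∀ k ≤ s, (∏ k ∈ Finset.range (s + 1),
        (Polynomial.X - Polynomial.C (k : ℚ))).eval (k : ℚ) = 0 := by
      intro k hk
      rw [Polynomial.eval_prod]
      exact Finset.prod_eq_zero (Finset.mem_range.mpr (by omega : k < s + 1)) (by simp)
    have h0 := h 0 (Nat.zero_le s)
    rw [Nat.cast_zero] at h0
    rw [h0, zero_smul, zero_add]
    refine Finset.sum_eq_zero fun i _ => ?_
    have hi := h (i + 1) i.isLt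
    rw [Nat.cast_add, Nat.cast_one] at hi
    rw [hi, zero_smul]
  · intro f hf
    rw [RingHom.mem_ker] at hf
    rw [Ideal.mem_span_singleton]
    refine Finset.prod_dvd_of_coprime ?_ ?_
    · intro a _ b _ hab
      exact Polynomial.pairwise_coprime_X_sub_C (Nat.cast_injective (R := ℚ)) hab
    · intro k hk
      rw [Polynomial.dvd_iff_isRoot, Polynomial.IsRoot]
      have h := congrArg (idemChar s k) hf
      rw [← Polynomial.aeval_algHom_apply, map_zero,
        idemChar_idemSum s k (by simpa [Nat.lt_succ_iff] using hk)] at h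
      simpa [Polynomial.aeval_def] using h

/-- Lagrange interpolation gives `f` with `f(i+1) = 1` that vanishes at the other nodes `0, …, s`;
then `f(e)` is the `i`-th generator. -/
lemma idemGen_mem_range (s : ℕ) (i : Fin s) :
    idemGen s i ∈ (Polynomial.aeval (R := ℚ) (idemSum s)).range := by
  set f := Lagrange.interpolate (Finset.range (s + 1)) (fun k : ℕ => (k : ℚ))
    (fun k => if k = (i : ℕ) + 1 then 1 else 0)
  have h : ∀ k ≤ s, f.eval (k : ℚ) = if k = (i : ℕ) + 1 then 1 else 0 := fun k hk =>
    Lagrange.eval_interpolate_at_node (v := fun k : ℕ => (k : ℚ)) _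
      (Nat.cast_injective.injOn) (Finset.mem_range.mpr (by omega))
  refine ⟨f, ?_⟩
  have h0 := h 0 (Nat.zero_le s)
  have hj : ∀ j : Fin s, f.eval ((j : ℕ) + 1 : ℚ) = if j = i then 1 else 0 := by
    intro j
    have := h (j + 1) j.isLt
    rw [Nat.cast_add, Nat.cast_one] at this
    rw [this]
    simp [Fin.ext_iff]
  rw [Nat.cast_zero] at h0
  change Polynomial.aeval (idemSum s) f = _
  rw [aeval_idemSum, h0]
  simp [hj]

lemma aeval_idemSum_surjective (s : ℕ) :
    Function.Surjective (Polynomial.aeval (R := ℚ) (idemSum s)) := by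
  intro y
  obtain ⟨p, rfl⟩ := Ideal.Quotient.mk_surjective y
  change Ideal.Quotient.mk (idemIdeal s) p ∈ (Polynomial.aeval (R := ℚ) (idemSum s)).range
  induction p using MvPolynomial.induction_on with
  | C a => exact Subalgebra.algebraMap_mem _ a
  | add p q hp hq => rw [map_add]; exact add_mem hp hq
  | mul_X p i hp => rw [map_mul]; exact mul_mem hp (idemGen_mem_range s i)

/-- For `s ≥ 1` and `S_s = ℚ[e_1,…,e_s]/(e_i e_j - δ_{ij} e_i)`, there is a
`ℚ`-algebra isomorphism `ℚ[X]/(X(X-1)⋯(X-s)) ≅ S_s` sending `X` to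
`e = e_1 + 2 e_2 + ⋯ + s e_s`. -/
theorem stmt5 (s : ℕ) (hs : 1 ≤ s) :
    ∃ φ : (Polynomial ℚ ⧸ Ideal.span
        {∏ k ∈ Finset.range (s + 1), (Polynomial.X - Polynomial.C (k : ℚ))}) ≃ₐ[ℚ]
        (MvPolynomial (Fin s) ℚ ⧸ idemIdeal s),
      φ (Ideal.Quotient.mk _ Polynomial.X) =
        ∑ i : Fin s, ((i : ℕ) + 1 : ℚ) • Ideal.Quotient.mk (idemIdeal s) (X i) := by
  exact ⟨(Ideal.quotientEquivAlgOfEq ℚ (ker_aeval_idemSum s)).trans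
    (Ideal.quotientKerAlgEquivOfSurjective (aeval_idemSum_surjective s)),
    Polynomial.aeval_X (idemSum s)⟩
end

section
/- For every matrix A in the special orthogonal group SO(3) (i.e. Matrix.specialOrthogonalGroup (Fin 3) ℝ), the self-map of the unit sphere S² = {x ∈ ℝ³ : ‖x‖ = 1} induced by the linear action of A is homotopic to the identity map of S². (Hence a rotation of S² has degree 1; this is used to show that the Weyl/quotient group action on the low-degree cohomology of the fixed points of B_{C_{2^n}}S¹ is trivial.) -/
/-!
The linear isometries of `ℝ³` are products of reflections in planes `uᗮ` (Cartan–Dieudonné,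
`LinearIsometryEquiv.reflections_generate_dim`). Since `ℝ³ ∖ {0}` is path-connected, moving the
normal vector `u` shows that any two such reflections are homotopic as self-maps of the sphere
(`homotopic_reflection`). Hence a product of `n` reflections is homotopic to the `n`-th power of one
fixed reflection, that is, to the identity if `n` is even and to that reflection if `n` is odd.
Its determinant is `(-1) ^ n`, so determinant `1` forces the first case
(`det_homotopic_prod`).
-/

/-- Euclidean three-space. -/
abbrev E3 := EuclideanSpace ℝ (Fin 3)

/-- The unit sphere `S²` in Euclidean three-space. -/
abbrev S2 := Metric.sphere (0 : E3) 1

/-- The self-map of the unit sphere obtained by restricting a linear isometry. -/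
noncomputable def sphereMap (φ : E3 ≃ₗᵢ[ℝ] E3) : C(S2, S2) where
  toFun x := ⟨φ x, by simp⟩
  continuous_toFun := by fun_prop

lemma sphereMap_one : sphereMap 1 = ContinuousMap.id _ := rfl

lemma sphereMap_mul (φ ψ : E3 ≃ₗᵢ[ℝ] E3) :
    sphereMap (φ * ψ) = (sphereMap φ).comp (sphereMap ψ) := rfl

lemma reflection_orthogonal_singleton_apply (u x : E3) :
    (ℝ ∙ u)ᗮ.reflection x = x - (2 : ℝ) • (inner ℝ u x / ‖u‖ ^ 2) • u := by
  rw [Submodule.reflection_orthogonal_apply, Submodule.reflection_singleton_apply, neg_sub,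
    ofNat_smul_eq_nsmul ℝ 2]
  rfl

lemma homotopic_reflection {u v : E3} (hu : u ≠ 0) (hv : v ≠ 0) :
    (sphereMap (ℝ ∙ u)ᗮ.reflection).Homotopic (sphereMap (ℝ ∙ v)ᗮ.reflection) := by
  have hrank : 1 < Module.rank ℝ E3 := by
    rw [← Module.finrank_eq_rank, finrank_euclideanSpace_fin]
    norm_num
  obtain ⟨γ, hγ⟩ := (isPathConnected_compl_singleton_of_one_lt_rank hrank (0 : E3)).joinedIn
    u (by simpa using hu) v (by simpa using hv)
  have hne : ∀ t, γ t ≠ 0 := fun t => by simpa using hγ t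
  refine ⟨⟨⟨fun p => sphereMap (ℝ ∙ γ p.1)ᗮ.reflection p.2, ?_⟩, ?_, ?_⟩⟩
  · refine Continuous.subtype_mk (f := fun p : unitInterval × S2 =>
      (ℝ ∙ γ p.1)ᗮ.reflection (p.2 : E3)) ?_ _
    simp only [reflection_orthogonal_singleton_apply]
    have h : ∀ p : unitInterval × S2, ‖γ p.1‖ ^ 2 ≠ 0 := fun p =>
      pow_ne_zero _ (norm_ne_zero_iff.2 (hne _))
    fun_prop (disch := exact h)
  · intro x
    simp
  · intro x
    simp

lemma det_reflection_orthogonal_singleton {u : E3} (hu : u ≠ 0) :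
    LinearMap.det ((ℝ ∙ u)ᗮ.reflection : E3 ≃ₗᵢ[ℝ] E3).toLinearMap = -1 := by
  rw [Submodule.det_reflection, Submodule.orthogonal_orthogonal, finrank_span_singleton hu,
    pow_one]

lemma det_mul_isometry (φ ψ : E3 ≃ₗᵢ[ℝ] E3) :
    LinearMap.det (φ * ψ).toLinearMap =
      LinearMap.det φ.toLinearMap * LinearMap.det ψ.toLinearMap :=
  LinearMap.det_comp φ.toLinearMap ψ.toLinearMap

/-- The homotopy class of a product of reflections is determined by its determinant: the class of
the identity for `1`, and that of any fixed reflection for `-1`. The zero vectors in the list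
contribute identity factors. -/
lemma det_homotopic_prod {e : E3} (he : e ≠ 0) (l : List E3) :
    let φ : E3 ≃ₗᵢ[ℝ] E3 := (l.map fun v => (ℝ ∙ v)ᗮ.reflection).prod
    (LinearMap.det φ.toLinearMap = 1 ∧ (sphereMap φ).Homotopic (ContinuousMap.id _)) ∨
    (LinearMap.det φ.toLinearMap = -1 ∧
      (sphereMap φ).Homotopic (sphereMap (ℝ ∙ e)ᗮ.reflection)) := by
  induction l with
  | nil => exact Or.inl ⟨LinearMap.det_id, .refl _⟩
  | cons u l ih =>
    simp only [List.map_cons, List.prod_cons] at ih ⊢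
    generalize (l.map fun v : E3 => (ℝ ∙ v)ᗮ.reflection).prod = φ at ih ⊢
    by_cases hu : u = 0
    · have h1 : (ℝ ∙ u)ᗮ.reflection = (1 : E3 ≃ₗᵢ[ℝ] E3) := by
        ext1 x
        rw [reflection_orthogonal_singleton_apply, hu, smul_zero, smul_zero, sub_zero]
        rfl
      rwa [h1, one_mul]
    have hdet : LinearMap.det ((ℝ ∙ u)ᗮ.reflection * φ).toLinearMap =
        -LinearMap.det φ.toLinearMap := by
      rw [det_mul_isometry, det_reflection_orthogonal_singleton hu, neg_one_mul]
    rw [hdet, sphereMap_mul]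
    rcases ih with ⟨hd, hh⟩ | ⟨hd, hh⟩
    · have h := (homotopic_reflection hu he).comp hh
      rw [ContinuousMap.comp_id] at h
      exact Or.inr ⟨congrArg Neg.neg hd, h⟩
    · have h := (homotopic_reflection hu he).comp hh
      rw [← sphereMap_mul (ℝ ∙ e)ᗮ.reflection, Submodule.reflection_mul_reflection,
        sphereMap_one] at h
      exact Or.inl ⟨by rw [hd, neg_neg], h⟩

/-- For `A ∈ SO(3)`, the self-map of the unit sphere `S² ⊆ ℝ³` induced by the
linear action of `A` is homotopic to the identity. -/
theorem stmt12 (A : Matrix.specialOrthogonalGroup (Fin 3) ℝ)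
    (f : C(Metric.sphere (0 : EuclideanSpace ℝ (Fin 3)) 1,
          Metric.sphere (0 : EuclideanSpace ℝ (Fin 3)) 1))
    (hf : ∀ x : Metric.sphere (0 : EuclideanSpace ℝ (Fin 3)) 1,
      (f x : EuclideanSpace ℝ (Fin 3)) =
        Matrix.toEuclideanLin (A : Matrix (Fin 3) (Fin 3) ℝ) (x : EuclideanSpace ℝ (Fin 3))) :
    f.Homotopic (ContinuousMap.id _) := by
  obtain ⟨A, hA⟩ := A
  obtain ⟨hO, hdet⟩ := Matrix.mem_specialOrthogonalGroup_iff.1 hA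
  have hAA : A.conjTranspose * A = 1 := (Matrix.mem_orthogonalGroup_iff' _ _).1 hO
  have hinner : ∀ x y : E3, inner ℝ (Matrix.toEuclideanLin A x) (Matrix.toEuclideanLin A y) =
      inner ℝ x y := by
    intro x y
    rw [← LinearMap.adjoint_inner_right, ← Matrix.toEuclideanLin_conjTranspose_eq_adjoint]
    congr 1
    simp only [Matrix.toLpLin_apply, Matrix.mulVec_mulVec, hAA, Matrix.one_mulVec]
  let φ : E3 ≃ₗᵢ[ℝ] E3 :=
    ((Matrix.toEuclideanLin A).isometryOfInner hinner).toLinearIsometryEquiv rfl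
  have hfφ : f = sphereMap φ := by
    ext1 x
    exact Subtype.ext (hf x)
  have hφdet : LinearMap.det φ.toLinearMap = 1 := by
    change LinearMap.det (Matrix.toLpLin 2 2 A) = 1
    rw [Matrix.toLpLin_eq_toLin, LinearMap.det_toLin, hdet]
  obtain ⟨e, he⟩ := exists_ne (0 : E3)
  obtain ⟨l, -, hl⟩ := φ.reflections_generate_dim
  have key := det_homotopic_prod he l
  simp only [← hl, hφdet] at key
  rw [hfφ]
  rcases key with ⟨-, h⟩ | ⟨h, -⟩
  · exact h
  · norm_num at h
end

section
/- Fix n ≥ 1. For a tuple t = (j_0, …, j_{n−1}, j'_0, …, j'_{n−1}) of natural numbers, define k(t) = n if j_k = 0 for all k, and k(t) = min{k : j_k ≠ 0} otherwise; define k'(t) = −1 if j'_k = 0 for all k, and k'(t) = max{k : j'_k ≠ 0} otherwise. Let T be the set of tuples t with k'(t) < k(t). Then the map sending t ∈ T to the data (2·Σ_{k=0}^{n−2} j_k + j_{n−1}, j_{n−1} + j'_{n−1}, (j_k + j'_k)_{k=0}^{n−2}) ∈ ℕ × ℕ × ℕ^(n−1) is injective on T. (These are the multiplicities of the trivial representation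 1, the sign representation σ, and the rotation representations λ_k in the virtual representation V_t^± = Σ_{k=0}^{n−2}(j_k(2−λ_k) − j'_k λ_k) + j_{n−1}(1−σ) − j'_{n−1}σ; injectivity says the virtual representations V_t^± for t ∈ T are pairwise non-isomorphic, so they index distinct RO(C_{2^n})-degrees in the rational equivariant stable stems.) -/
/-!
The condition `k'(t) < k(t)` says that the support of `j'` lies strictly to the left of the support
of `j` (`lt_of_mem_T`). If `t, u ∈ T` have the same sums `j_k + j'_k` for all `k`, then their
`j`-parts are comparable in the pointwise order (`le_or_le_of_add_eq`): a strict inequality at `a`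
one way and at `b` the other way would force both `b < a` and `a < b`. The multiplicity of the
trivial representation is a combination of the `j_k` with positive coefficients, hence strictly
monotone in `j`, so comparable `j`-parts with the same multiplicity coincide
(`eq_of_le_of_weighted_sum_eq`); then the `j'`-parts coincide too.
-/

/-- `k(t)` for a tuple `j = (j_0, …, j_{n-1})`: the minimum of `{k : j_k ≠ 0}`, or `n` if all
`j_k` vanish (as an integer, so it can be compared with `k'(t)`). -/
noncomputable def kOf (n : ℕ) (j : Fin n → ℕ) : ℤ :=
  sInf (insert (n : ℤ) {m : ℤ | ∃ k : Fin n, j k ≠ 0 ∧ m = (k : ℤ)})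

/-- `k'(t)` for a tuple `j' = (j'_0, …, j'_{n-1})`: the maximum of `{k : j'_k ≠ 0}`, or `-1` if
all `j'_k` vanish. -/
noncomputable def kOf' (n : ℕ) (j' : Fin n → ℕ) : ℤ :=
  sSup (insert (-1 : ℤ) {m : ℤ | ∃ k : Fin n, j' k ≠ 0 ∧ m = (k : ℤ)})

lemma lt_of_mem_T {n : ℕ} {j j' : Fin n → ℕ} (h : kOf' n j' < kOf n j) {a b : Fin n}
    (ha : j' a ≠ 0) (hb : j b ≠ 0) : a < b := by
  have h1 : kOf n j ≤ (b : ℤ) := by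
    refine csInf_le ⟨0, ?_⟩ (Or.inr ⟨b, hb, rfl⟩)
    rintro m (rfl | ⟨k, -, rfl⟩) <;> omega
  have h2 : (a : ℤ) ≤ kOf' n j' := by
    refine le_csSup ⟨n, ?_⟩ (Or.inr ⟨a, ha, rfl⟩)
    rintro m (rfl | ⟨k, -, rfl⟩) <;> omega
  rw [Fin.lt_def]
  omega

lemma le_or_le_of_add_eq {n : ℕ} {j j' i i' : Fin n → ℕ} (hj : kOf' n j' < kOf n j)
    (hi : kOf' n i' < kOf n i) (h : ∀ k, j k + j' k = i k + i' k) : j ≤ i ∨ i ≤ j := by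
  by_contra! hc
  simp only [Pi.le_def, not_forall, not_le] at hc
  obtain ⟨⟨a, ha⟩, b, hb⟩ := hc
  have hsa := h a
  have hsb := h b
  have hba : b < a := lt_of_mem_T hj (by omega) (by omega)
  have hab : a < b := lt_of_mem_T hi (by omega) (by omega)
  exact lt_asymm hab hba

lemma eq_of_le_of_weighted_sum_eq {m : ℕ} {j i : Fin (m + 1) → ℕ} (hle : j ≤ i)
    (h : 2 * ∑ k : Fin m, j k.castSucc + j (Fin.last m)
      = 2 * ∑ k : Fin m, i k.castSucc + i (Fin.last m)) : j = i := by
  have hs : ∑ k : Fin m, j k.castSucc ≤ ∑ k : Fin m, i k.castSucc :=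
    Finset.sum_le_sum fun k _ => hle k.castSucc
  have hl : j (Fin.last m) ≤ i (Fin.last m) := hle (Fin.last m)
  have hs' : ∑ k : Fin m, j k.castSucc = ∑ k : Fin m, i k.castSucc := by omega
  rw [Finset.sum_eq_sum_iff_of_le fun k _ => hle k.castSucc] at hs'
  funext k
  refine Fin.lastCases ?_ (fun k => hs' k (Finset.mem_univ k)) k
  omega

/-- For `n ≥ 1`, on the set `T` of tuples
`t = (j_0, …, j_{n-1}, j'_0, …, j'_{n-1})` with `k'(t) < k(t)`, the map recording the
multiplicities `(2·Σ_{k=0}^{n-2} j_k + j_{n-1}, j_{n-1} + j'_{n-1}, (j_k + j'_k)_{k=0}^{n-2})`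
of the representations `1`, `σ`, `λ_k` in `V_t^±` is injective; i.e. the virtual
representations `V_t^±`, `t ∈ T`, are pairwise non-isomorphic. -/
theorem stmt13 (n : ℕ) (hn : 1 ≤ n) :
    Set.InjOn
      (fun t : (Fin n → ℕ) × (Fin n → ℕ) =>
        ((2 * ∑ k : Fin (n - 1), t.1 (Fin.castLE (by omega) k) + t.1 ⟨n - 1, by omega⟩,
          t.1 ⟨n - 1, by omega⟩ + t.2 ⟨n - 1, by omega⟩,
          fun k : Fin (n - 1) =>
            t.1 (Fin.castLE (by omega) k) + t.2 (Fin.castLE (by omega) k)) :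
          ℕ × ℕ × (Fin (n - 1) → ℕ)))
      {t : (Fin n → ℕ) × (Fin n → ℕ) | kOf' n t.2 < kOf n t.1} := by
  obtain ⟨m, rfl⟩ : ∃ m, n = m + 1 := ⟨n - 1, by omega⟩
  rintro ⟨j, j'⟩ hj ⟨i, i'⟩ hi heq
  obtain ⟨h1, h23⟩ := Prod.ext_iff.1 heq
  obtain ⟨h2, h3⟩ := Prod.ext_iff.1 h23
  have hsum : ∀ k, j k + j' k = i k + i' k :=
    fun k => Fin.lastCases h2 (fun k => congrFun h3 k) k
  have hji : j = i := by
    rcases le_or_le_of_add_eq hj hi hsum with hle | hle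
    · exact eq_of_le_of_weighted_sum_eq hle h1
    · exact (eq_of_le_of_weighted_sum_eq hle h1.symm).symm
  subst hji
  exact Prod.ext rfl (funext fun k => Nat.add_left_cancel (hsum k))
end
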